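/- Let T > 0 and let (H_n) be a sequence of set-valued maps from [0,T] to ℝ^m that is uniformly integrally bounded (there is an integrable g : [0,T] → ℝ₊ with sup_{x∈H_n(t)} ‖x‖ ≤ g(t) for all n and t). Let H be a set-valued map on [0,T] with nonempty convex images such that for every τ ∈ [0,T], limsup_n H_n(τ) ⊂ H(τ), where x ∈ limsup_n A_n iff every neighborhood of x intersects infinitely many A_n. If h_n is an integrable selection of H_n for each n (h_n(u) ∈ H_n(u) for all u ∈ [0,T]), then along some subsequence (h_n) converges weakly in L¹([0,T], ℝ^m) to an integrable selection h of H (h(u) ∈ H(u) for every u ∈ [0,T]); in particular, along this subsequence, ∫_0^τ h_n(u) du → ∫_0^τ h(u) du for every τ ∈ [0,T]. -/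

import Mathlib

open MeasureTheory Filter Topology Metric Set Pointwise

noncomputable section

/-- `ℝ^m` with the Euclidean norm. -/
abbrev Euc (m : ℕ) := EuclideanSpace ℝ (Fin m)

/-- A standard set-valued map `F : ℝ^m ⇒ ℝ^m`: nonempty compact convex values,
closed graph, and linear growth. -/
def IsStandardSVM {m : ℕ} (F : Euc m → Set (Euc m)) : Prop :=
  (∀ x, (F x).Nonempty ∧ IsCompact (F x) ∧ Convex ℝ (F x)) ∧
  IsClosed {p : Euc m × Euc m | p.2 ∈ F p.1} ∧
  ∃ c > 0, ∀ x, ∀ z ∈ F x, ‖z‖ ≤ c * (1 + ‖x‖)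

/-- A solution of the differential inclusion `dx/dt ∈ F x`: an absolutely continuous
curve `z : ℝ → ℝ^m` (written as the integral of a locally integrable derivative `h`)
with `h t ∈ F (z t)` for almost every `t`. -/
def IsSolution {m : ℕ} (F : Euc m → Set (Euc m)) (z : ℝ → Euc m) : Prop :=
  Continuous z ∧ ∃ h : ℝ → Euc m,
    (∀ a b : ℝ, IntervalIntegrable h volume a b) ∧
    (∀ᵐ t ∂volume, h t ∈ F (z t)) ∧
    ∀ t : ℝ, z t = z 0 + ∫ u in (0:ℝ)..t, h u

/-- `Φ_t(x)`: the set of points reached at time `t` by solutions starting at `x`. -/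
def PhiT {m : ℕ} (F : Euc m → Set (Euc m)) (t : ℝ) (x : Euc m) : Set (Euc m) :=
  {y | ∃ z : ℝ → Euc m, IsSolution F z ∧ z 0 = x ∧ z t = y}

/-- `ω_Φ(x) = ⋂_{t ≥ 0} closure (Φ_{[t,∞)}(x))`. -/
def omegaLimitSV {m : ℕ} (F : Euc m → Set (Euc m)) (x : Euc m) : Set (Euc m) :=
  ⋂ t ∈ Ici (0:ℝ), closure {y | ∃ s ≥ t, y ∈ PhiT F s x}

/-- An attractor for the set-valued dynamical system induced by `F`: a nonempty,
compact, invariant set admitting a neighborhood `U` with `Φ_t(U) ⊆ N^ε(A)` for all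
`t` large enough. -/
def IsAttractorSV {m : ℕ} (F : Euc m → Set (Euc m)) (A : Set (Euc m)) : Prop :=
  A.Nonempty ∧ IsCompact A ∧
  (∀ x ∈ A, ∃ z : ℝ → Euc m, IsSolution F z ∧ z 0 = x ∧ Set.range z ⊆ A) ∧
  ∃ U : Set (Euc m), IsOpen U ∧ A ⊆ U ∧
    ∀ ε > 0, ∃ tε > 0, ∀ t ≥ tε, ∀ x ∈ U, PhiT F t x ⊆ Metric.thickening ε A

/-- The basin of attraction `B(A) = {x | ω_Φ(x) ⊆ A}`. -/
def basinSV {m : ℕ} (F : Euc m → Set (Euc m)) (A : Set (Euc m)) : Set (Euc m) :=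
  {x | omegaLimitSV F x ⊆ A}

/-- The limit set `L(X) = ⋂_{t ≥ 0} closure {X s : s ≥ t}` of a path. -/
def limitSet {m : ℕ} (X : ℝ → Euc m) : Set (Euc m) :=
  ⋂ t ∈ Ici (0:ℝ), closure {y | ∃ s ≥ t, X s = y}

/-- `inf_{z ∈ S_Φ} sup_{u ∈ [0,T]} ‖z u - Y u‖`. -/
def distToSol {m : ℕ} (F : Euc m → Set (Euc m)) (Y : ℝ → Euc m) (T : ℝ) : ℝ :=
  sInf {d | ∃ z : ℝ → Euc m, IsSolution F z ∧ d = ⨆ u : Icc (0:ℝ) T, ‖z u - Y u‖}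

/-- Asymptotic pseudotrajectory of the set-valued dynamical system induced by `F`. -/
def IsAPT {m : ℕ} (F : Euc m → Set (Euc m)) (X : ℝ → Euc m) : Prop :=
  ∀ T > 0, Tendsto (fun t => distToSol F (fun u => X (t + u)) T) atTop (𝓝 0)

/-- A point `p` is attainable by the process `X`: for every `t > 0` and every
neighborhood `U` of `p`, `P(∃ s ≥ t, X s ∈ U) > 0`. -/
def Attainable {m : ℕ} {Ω : Type*} [MeasurableSpace Ω] (μ : Measure Ω)
    (X : ℝ → Ω → Euc m) (p : Euc m) : Prop :=
  ∀ t > 0, ∀ U ∈ 𝓝 p, 0 < μ {ω | ∃ s ≥ t, X s ω ∈ U}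

/-- `τ_n = γ_1 + ⋯ + γ_n`. -/
def tauOf (γ : ℕ → ℝ) (n : ℕ) : ℝ := ∑ i ∈ Finset.range n, γ (i + 1)

/-- `m(t) = sup {j | τ_j ≤ t}`. -/
def mIdx (γ : ℕ → ℝ) (t : ℝ) : ℕ := sSup {j | tauOf γ j ≤ t}

/-- Hypothesis H1: there is `w t α T` decreasing to `0` in `t` dominating the
conditional probability that `sup_{s ≥ t} inf_{z ∈ S_Φ} sup_{u ∈ [0,T]} ‖z u − X (s+u)‖ ≥ α`. -/
def HypH1 {m : ℕ} {Ω : Type*} [MeasurableSpace Ω] (μ : Measure Ω)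
    (𝓕 : ℝ → MeasurableSpace Ω) (F : Euc m → Set (Euc m)) (X : ℝ → Ω → Euc m) : Prop :=
  ∃ w : ℝ → ℝ → ℝ → ℝ,
    (∀ α > 0, ∀ T > 0, Antitone (fun t => w t α T) ∧ Tendsto (fun t => w t α T) atTop (𝓝 0)) ∧
    ∀ α > 0, ∀ T > 0, ∀ t : ℝ, ∀ᵐ ω ∂μ,
      (μ[Set.indicator {ω' | α ≤ ⨆ s : Ici t, distToSol F (fun u => X ((s : ℝ) + u) ω') T}
          (fun _ => (1:ℝ)) | 𝓕 t]) ω ≤ w t α T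

/-- `F^δ(x) = {y | ∃ z ∈ B(x,δ), dist(y, F z) < δ}`, with the convention `F^0 = F`. -/
def Fdelta {m : ℕ} (F : Euc m → Set (Euc m)) (δ : ℝ) (x : Euc m) : Set (Euc m) :=
  if δ = 0 then F x
  else {y | ∃ z : Euc m, dist z x < δ ∧ Metric.infDist y (F z) < δ}

/-- A `(δ(·), V(·))`-perturbed solution of `dx/dt ∈ F x`. -/
def IsPerturbedSolution {m : ℕ} (F : Euc m → Set (Euc m)) (δ : ℝ → ℝ) (V : ℝ → Euc m)
    (y : ℝ → Euc m) : Prop :=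
  Continuous y ∧ (∀ t > 0, 0 < δ t) ∧ Antitone δ ∧ Tendsto δ atTop (𝓝 0) ∧
  (∀ a b : ℝ, IntervalIntegrable V volume a b) ∧
  (∀ T > 0, Tendsto (fun t => ⨆ u : Icc (0:ℝ) T, ‖∫ r in t..(t + (u : ℝ)), V r‖)
    atTop (𝓝 0)) ∧
  ∃ h : ℝ → Euc m, (∀ a b : ℝ, IntervalIntegrable h volume a b) ∧
    (∀ᵐ t ∂(volume.restrict (Ioi (0:ℝ))), h t - V t ∈ Fdelta F (δ t) (y t)) ∧
    ∀ t ∈ Ici (0:ℝ), y t = y 0 + ∫ u in (0:ℝ)..t, h u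

/-- `Δ(n,T) = sup_{n < k ≤ m(τ_n + T)} ‖∑_{i=n}^{k-1} γ_{i+1} U_{i+1}‖`. -/
def DeltaNT {m : ℕ} {Ω : Type*} (γ : ℕ → ℝ) (U : ℕ → Ω → Euc m) (T : ℝ) (n : ℕ)
    (ω : Ω) : ℝ :=
  ⨆ k : {k : ℕ // n < k ∧ k ≤ mIdx γ (tauOf γ n + T)},
    ‖∑ i ∈ Finset.Ico n (k : ℕ), γ (i + 1) • U (i + 1) ω‖

/-- Condition (bruit2): the conditional probability that `sup_{m ≥ n} Δ(m,T) ≥ ε` is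
dominated by some `w n ε T` decreasing to `0` in `n`. -/
def Bruit2 {m : ℕ} {Ω : Type*} [MeasurableSpace Ω] (μ : Measure Ω)
    (𝓕 : ℕ → MeasurableSpace Ω) (γ : ℕ → ℝ) (U : ℕ → Ω → Euc m) : Prop :=
  ∃ w : ℕ → ℝ → ℝ → ℝ,
    (∀ ε > 0, ∀ T > 0, Antitone (fun n => w n ε T) ∧ Tendsto (fun n => w n ε T) atTop (𝓝 0)) ∧
    ∀ ε > 0, ∀ T > 0, ∀ n : ℕ, ∀ᵐ ω ∂μ,
      (μ[Set.indicator {ω' | ε ≤ ⨆ k : Ici n, DeltaNT γ U T (k : ℕ) ω'}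
          (fun _ => (1:ℝ)) | 𝓕 n]) ω ≤ w n ε T

/-- Topological `limsup` of a sequence of sets: points whose every neighborhood
meets infinitely many of the sets. -/
def setLimsup {X : Type*} [TopologicalSpace X] (A : ℕ → Set X) : Set X :=
  {y | ∀ U ∈ 𝓝 y, {n | (U ∩ A n).Nonempty}.Infinite}

/-- The operator `Λ^δ` on continuous paths `[0,T] → ℝ^m` (with `Λ^0 = Λ`). -/
def LambdaD {m : ℕ} (F : Euc m → Set (Euc m)) (T : ℝ) (hT : 0 ≤ T) (δ : ℝ)
    (z : C(Icc (0:ℝ) T, Euc m)) : Set C(Icc (0:ℝ) T, Euc m) :=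
  {y | ∃ h : ℝ → Euc m, IntervalIntegrable h volume 0 T ∧
    (∀ u : Icc (0:ℝ) T, h u ∈ Fdelta F δ (z u)) ∧
    ∀ τ : Icc (0:ℝ) T, y τ = z ⟨0, Set.left_mem_Icc.mpr hT⟩ + ∫ u in (0:ℝ)..(τ : ℝ), h u}

/-- `Φ^T(M) = closure (⋃_{s ∈ [0,T]} Φ_s(M))`. -/
def PhiTM {m : ℕ} (F : Euc m → Set (Euc m)) (T : ℝ) (M : Set (Euc m)) : Set (Euc m) :=
  closure (⋃ s ∈ Icc (0:ℝ) T, ⋃ x ∈ M, PhiT F s x)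

/-- `‖F‖ = sup_{x ∈ Φ^T(M)} sup_{y ∈ F x} ‖y‖`. -/
def normF {m : ℕ} (F : Euc m → Set (Euc m)) (T : ℝ) (M : Set (Euc m)) : ℝ :=
  sSup {r | ∃ x ∈ PhiTM F T M, ∃ y ∈ F x, r = ‖y‖}

/-- `K_C`: Lipschitz paths with constant `‖F‖ + C + 1` starting in `M`. -/
def KC {m : ℕ} (F : Euc m → Set (Euc m)) (T : ℝ) (hT : 0 ≤ T) (M : Set (Euc m))
    (C : ℝ) : Set C(Icc (0:ℝ) T, Euc m) :=
  {y | (∀ u v : Icc (0:ℝ) T, ‖y u - y v‖ ≤ (normF F T M + C + 1) * |(u : ℝ) - (v : ℝ)|) ∧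
    y ⟨0, Set.left_mem_Icc.mpr hT⟩ ∈ M}

/-- `S_{[0,T]}`: restrictions to `[0,T]` of solutions starting in `M`. -/
def SolRestrict {m : ℕ} (F : Euc m → Set (Euc m)) (T : ℝ) (M : Set (Euc m)) :
    Set C(Icc (0:ℝ) T, Euc m) :=
  {y | ∃ z : ℝ → Euc m, IsSolution F z ∧ z 0 ∈ M ∧ ∀ u : Icc (0:ℝ) T, y u = z u}

/-- A generalised stochastic approximation process relative to `F`. -/
def IsGSAP {m : ℕ} {Ω : Type*} [MeasurableSpace Ω] (μ : Measure Ω)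
    (F : Euc m → Set (Euc m)) (M : Set (Euc m)) (γ : ℕ → ℝ)
    (Fn : ℕ → Euc m → Set (Euc m)) (U : ℕ → Ω → Euc m) (x : ℕ → Ω → Euc m) : Prop :=
  (∀ n, 0 < γ n) ∧
  Tendsto (fun n => ∑ i ∈ Finset.range n, γ (i + 1)) atTop atTop ∧
  Tendsto γ atTop (𝓝 0) ∧
  (∃ C, ∀ n ω, ‖U n ω‖ ≤ C) ∧
  (∀ n ω, x (n + 1) ω - x n ω - γ (n + 1) • U (n + 1) ω ∈ γ (n + 1) • Fn n (x n ω)) ∧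
  (∀ T > 0, ∀ᵐ ω ∂μ, Tendsto
    (fun n => ⨆ k : {k : ℕ // ∑ i ∈ Finset.Ico n k, γ i ≤ T},
      ‖∑ i ∈ Finset.Ico n (k : ℕ), γ (i + 1) • U (i + 1) ω‖) atTop (𝓝 0)) ∧
  (∀ n ω, x n ω ∈ M) ∧
  (∀ δ > 0, ∃ n₀ : ℕ, ∀ n ≥ n₀, ∀ ω, Fn n (x n ω) ⊆ Fdelta F δ (x n ω))

theorem isCompact_convexHull_aux {m : ℕ} {K : Set (Euc m)} (hK : IsCompact K) :
    IsCompact (convexHull ℝ K) := by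
  rcases K.eq_empty_or_nonempty with rfl | ⟨x0, hx0⟩
  · simp
  set d := Module.finrank ℝ (Euc m) + 1
  let F : (Fin d → ℝ) × (Fin d → Euc m) → Euc m := fun p => ∑ i, p.1 i • p.2 i
  have hF : Continuous F := by fun_prop
  have hc : IsCompact (stdSimplex ℝ (Fin d) ×ˢ (Set.univ.pi fun _ : Fin d => K)) :=
    (isCompact_stdSimplex ℝ (Fin d)).prod (isCompact_univ_pi fun _ => hK)
  have : convexHull ℝ K = F '' (stdSimplex ℝ (Fin d) ×ˢ (Set.univ.pi fun _ : Fin d => K)) := by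
    apply Subset.antisymm
    · intro x hx
      obtain ⟨ι, _, z, w, hz, hai, hw, hw1, rfl⟩ := eq_pos_convex_span_of_mem_convexHull hx
      have hcard : Fintype.card ι ≤ Fintype.card (Fin d) := by
        have h1 := hai.card_le_finrank_succ
        have h2 := Submodule.finrank_le (vectorSpan ℝ (Set.range z))
        simp only [Fintype.card_fin]
        omega
      obtain ⟨e⟩ := Function.Embedding.nonempty_of_card_le hcard
      have hout : ∀ j, j ∉ Set.range e → Function.extend e w 0 j = 0 := by
        intro j hj
        rw [Function.extend_apply' _ _ _ (by simpa using hj)]; rfl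
      refine ⟨(Function.extend e w 0, Function.extend e z fun _ => x0), ⟨⟨?_, ?_⟩, ?_⟩, ?_⟩
      · intro j
        by_cases hj : ∃ a, e a = j
        · obtain ⟨a, rfl⟩ := hj
          simpa [e.injective.extend_apply] using (hw a).le
        · simp [Function.extend_apply' _ _ _ hj]
      · rw [← hw1]
        refine (Fintype.sum_of_injective e e.injective _ _ (fun j hj => hout j hj) ?_).symm
        intro i; simp [e.injective.extend_apply]
      · intro j _
        by_cases hj : ∃ a, e a = j
        · obtain ⟨a, rfl⟩ := hj
          simpa [e.injective.extend_apply] using hz ⟨a, rfl⟩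
        · simpa [Function.extend_apply' _ _ _ hj] using hx0
      · refine (Fintype.sum_of_injective e e.injective _ _ (fun j hj => ?_) ?_).symm
        · simp [hout j hj]
        intro i; simp [e.injective.extend_apply]
    · rintro _ ⟨⟨w, z⟩, ⟨⟨hw0, hw1⟩, hz⟩, rfl⟩
      exact (convex_convexHull ℝ K).sum_mem (fun i _ => hw0 i) hw1
        (fun i _ => subset_convexHull ℝ K (hz i trivial))
  rw [this]
  exact hc.image hF

theorem isClosed_setLimsup {X : Type*} [TopologicalSpace X] (A : ℕ → Set X) :
    IsClosed (setLimsup A) := by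
  rw [← closure_subset_iff_isClosed]
  intro y hy U hU
  obtain ⟨V, hVU, hV, hyV⟩ := mem_nhds_iff.1 hU
  obtain ⟨z, hzV, hz⟩ := mem_closure_iff.1 hy V hV hyV
  refine (hz V (hV.mem_nhds hzV)).mono ?_
  rintro n ⟨w, hw⟩
  exact ⟨w, hVU hw.1, hw.2⟩

theorem isCompact_setLimsup {m : ℕ} (A : ℕ → Set (Euc m)) (M : ℝ)
    (hA : ∀ n, ∀ x ∈ A n, ‖x‖ ≤ M) : IsCompact (setLimsup A) := by
  refine (isCompact_closedBall (0 : Euc m) M).of_isClosed_subset (isClosed_setLimsup A) ?_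
  intro y hy
  by_contra hcon
  have := hy (closedBall 0 M)ᶜ (isClosed_closedBall.isOpen_compl.mem_nhds hcon)
  obtain ⟨n, w, hw, hwA⟩ := this.nonempty
  exact hw (by simpa using hA n w hwA)

/-- pointwise conclusion -/
theorem mem_convexHull_limsup {m : ℕ} (A : ℕ → Set (Euc m)) (M : ℝ)
    (hA : ∀ n, ∀ x ∈ A n, ‖x‖ ≤ M) (φ : ℕ → ℕ) (hφ : StrictMono φ) (x : ℕ → Euc m)
    (hx : ∀ n, x n ∈ A (φ n)) (D : Set (Euc m)) (hD : Dense D) (v : Euc m)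
    (hv : ∀ p ∈ D, ∀ k : ℕ, inner ℝ p v ≤ ⨆ n, inner ℝ p (x (n + k))) :
    v ∈ convexHull ℝ (setLimsup A) := by
  by_contra hcon
  have hK := isCompact_convexHull_aux (isCompact_setLimsup A M hA)
  obtain ⟨f, a, b, hfa, hab, hfb⟩ := geometric_hahn_banach_closed_compact
    (convex_convexHull ℝ _) hK.isClosed (convex_singleton v) isCompact_singleton
    (disjoint_singleton_right.2 hcon)
  have hfb := hfb v rfl
  set p := (InnerProductSpace.toDual ℝ (Euc m)).symm f with hp
  have hfp : ∀ y, f y = inner ℝ p y := fun y => by simp [hp]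
  have hfa : ∀ y ∈ setLimsup A, f y < a := fun y hy => hfa y (subset_convexHull ℝ _ hy)
  set R := max M ‖v‖ + 1 with hR
  have hM0 : 0 ≤ M := (norm_nonneg _).trans (hA _ _ (hx 0))
  have hRpos : 0 < R := by positivity
  obtain ⟨q, hqD, hq⟩ := Metric.dense_iff.1 hD p ((b - a) / (3 * R)) (by
    apply div_pos <;> linarith)
  rw [Metric.mem_ball, dist_eq_norm] at hqD
  have key : ∀ y : Euc m, ‖y‖ ≤ R → |inner ℝ q y - f y| ≤ (b - a) / 3 := by
    intro y hy
    rw [hfp, ← inner_sub_left]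
    calc _ ≤ ‖q - p‖ * ‖y‖ := abs_real_inner_le_norm _ _
      _ ≤ ((b - a) / (3 * R)) * R := by gcongr
      _ = (b - a) / 3 := by field_simp
  have hMR : M ≤ R := by have := le_max_left M ‖v‖; linarith
  have hvR : ‖v‖ ≤ R := by have := le_max_right M ‖v‖; linarith
  have hxM : ∀ n, ‖x n‖ ≤ M := fun n => hA _ _ (hx n)
  set c := b - (b - a) / 3 with hc
  have hcv : c < inner ℝ q v := by
    have := abs_le.1 (key v hvR); linarith [this.1]
  have hfreq : ∀ k, ∃ n ≥ k, c < inner ℝ q (x n) := by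
    intro k
    obtain ⟨n, hn⟩ := exists_lt_of_lt_ciSup (hcv.trans_le (hv q hq k))
    exact ⟨n + k, by omega, hn⟩
  obtain ⟨ψ, hψ, hψc⟩ := Filter.extraction_of_frequently_atTop
    (Filter.frequently_atTop.2 hfreq)
  obtain ⟨y, hy, χ, hχ, hlim⟩ := (isCompact_closedBall (0 : Euc m) M).tendsto_subseq
    (x := fun n => x (ψ n)) (fun n => by simpa using hxM _)
  have hyL : y ∈ setLimsup A := by
    intro U hU
    rw [← Nat.frequently_atTop_iff_infinite]
    have h1 : ∀ᶠ n in atTop, x (ψ (χ n)) ∈ U := hlim hU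
    have h2 : StrictMono fun n => φ (ψ (χ n)) := hφ.comp (hψ.comp hχ)
    refine h2.tendsto_atTop.frequently (Eventually.frequently ?_)
    filter_upwards [h1] with n hn
    exact ⟨_, hn, hx _⟩
  have hcy : c ≤ inner ℝ q y := by
    refine ge_of_tendsto ((tendsto_const_nhds (x := q)).inner hlim) (Eventually.of_forall fun n => (hψc _).le)
  have h3 := abs_le.1 (key y ((by simpa using hy : ‖y‖ ≤ M).trans hMR))
  have h4 := hfa y hyL
  linarith [h3.2]

theorem weak_seq_compact {m : ℕ} (ν : Measure ℝ) [IsFiniteMeasure ν] (f : ℕ → Lp (Euc m) 2 ν)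
    (C : ℝ) (hf : ∀ n, ‖f n‖ ≤ C) :
    ∃ φ : ℕ → ℕ, StrictMono φ ∧ ∃ F : Lp (Euc m) 2 ν, ∀ w : Lp (Euc m) 2 ν,
      Tendsto (fun k => inner ℝ (f (φ k)) w) atTop (𝓝 (inner ℝ F w)) := by
  have : Fact ((2 : ENNReal) ≠ ⊤) := ⟨by simp⟩
  have h := WeakDual.isSeqCompact_closedBall ℝ (Lp (Euc m) 2 ν) 0 C
  let x : ℕ → WeakDual ℝ (Lp (Euc m) 2 ν) := fun n =>
    StrongDual.toWeakDual (InnerProductSpace.toDual ℝ (Lp (Euc m) 2 ν) (f n))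
  have hx : ∀ n, x n ∈ WeakDual.toStrongDual ⁻¹' Metric.closedBall (0 : StrongDual ℝ (Lp (Euc m) 2 ν)) C := by
    intro n
    have : ‖InnerProductSpace.toDual ℝ (Lp (Euc m) 2 ν) (f n)‖ ≤ C := by
      rw [LinearIsometryEquiv.norm_map]; exact hf n
    rw [Set.mem_preimage, mem_closedBall_zero_iff]
    exact this
  obtain ⟨a, -, φ, hφ, hlim⟩ := h hx
  refine ⟨φ, hφ, (InnerProductSpace.toDual ℝ (Lp (Euc m) 2 ν)).symm (WeakDual.toStrongDual a), fun w => ?_⟩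
  have := (WeakDual.eval_continuous w).continuousAt (x := a) |>.tendsto.comp hlim
  rw [InnerProductSpace.toDual_symm_apply]
  exact this

/-- Weak sequential compactness in `L¹` of a dominated sequence. -/
theorem weak_L1_compact {m : ℕ} (μ : Measure ℝ) [IsFiniteMeasure μ] (g : ℝ → ℝ)
    (hg : Integrable g μ) (h : ℕ → ℝ → Euc m) (hint : ∀ n, Integrable (h n) μ)
    (hb : ∀ n, ∀ᵐ u ∂μ, ‖h n u‖ ≤ g u) :
    ∃ φ : ℕ → ℕ, StrictMono φ ∧ ∃ F : ℝ → Euc m, Integrable F μ ∧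
      ∀ w : ℝ → Euc m, MemLp w ⊤ μ →
        Tendsto (fun k => ∫ u, inner ℝ (h (φ k) u) (w u) ∂μ) atTop
          (𝓝 (∫ u, inner ℝ (F u) (w u) ∂μ)) := by
  let gm := hg.aestronglyMeasurable.mk g
  have hgm : Measurable gm := hg.aestronglyMeasurable.stronglyMeasurable_mk.measurable
  have hgg : g =ᵐ[μ] gm := hg.aestronglyMeasurable.ae_eq_mk
  let G : ℝ → NNReal := fun u => ‖gm u‖₊ + 1
  have hG : Measurable G := by fun_prop
  have hG0 : ∀ u, G u ≠ 0 := fun u => by positivity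
  have hGint : Integrable (fun u => (G u : ℝ)) μ := by
    have : Integrable gm μ := hg.congr hgg
    simpa [G] using this.norm.add (integrable_const (1 : ℝ))
  let ν := μ.withDensity (fun u => (G u : ENNReal))
  have hνac : ν ≪ μ := withDensity_absolutelyContinuous _ _
  have : IsFiniteMeasure ν := by
    refine isFiniteMeasure_withDensity ?_
    have := hGint.2
    simp only [HasFiniteIntegral] at this
    refine ne_of_lt ?_
    convert this using 3 with u
    simp [enorm, NNReal.nnnorm_eq]
  let f : ℕ → ℝ → Euc m := fun n u => (G u)⁻¹ • h n u
  have hfm : ∀ n, AEStronglyMeasurable (f n) ν := fun n =>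
    AEStronglyMeasurable.mono_ac hνac
      ((hG.inv.stronglyMeasurable.aestronglyMeasurable).smul (hint n).aestronglyMeasurable)
  have hf1 : ∀ n, ∀ᵐ u ∂ν, ‖f n u‖ ≤ 1 := by
    intro n
    apply hνac.ae_le
    filter_upwards [hb n, hgg] with u h1 h2
    have h3 : ‖h n u‖ ≤ G u := by
      have : (G u : ℝ) = |gm u| + 1 := by simp [G]
      rw [this]
      have := le_abs_self (gm u)
      linarith
    have hp : (0 : ℝ) < G u := by exact_mod_cast pos_iff_ne_zero.2 (hG0 u)
    have : ‖f n u‖ = (G u : ℝ)⁻¹ * ‖h n u‖ := by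
      simp only [f, NNReal.smul_def, norm_smul]; simp
    rw [this, inv_mul_le_iff₀ hp]; simpa using h3
  have hfL : ∀ n, MemLp (f n) 2 ν := fun n => MemLp.of_bound (hfm n) 1 (hf1 n)
  obtain ⟨φ, hφ, F, hF⟩ := weak_seq_compact ν (fun n => (hfL n).toLp (f n))
    (ν.real univ ^ (2 : ENNReal).toReal⁻¹ * 1) (fun n => by
      refine Lp.norm_le_of_ae_bound zero_le_one ?_
      filter_upwards [(hfL n).coeFn_toLp, hf1 n] with u h1 h2
      rw [h1]; exact h2)
  refine ⟨φ, hφ, fun u => G u • F u, ?_, ?_⟩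
  · rw [← integrable_withDensity_iff_integrable_smul hG]
    exact (Lp.memLp F).integrable (by norm_num)
  · intro w hw
    have hwt : MemLp w ⊤ ν := by
      refine ⟨hw.1.mono_ac hνac, lt_of_le_of_lt ?_ hw.2⟩
      simp only [eLpNorm_exponent_top]
      exact eLpNormEssSup_mono_measure w hνac
    have hwν : MemLp w 2 ν := hwt.mono_exponent le_top
    have := hF (hwν.toLp w)
    simp only [L2.inner_def] at this
    have e1 : ∀ k, ∫ u, inner ℝ (((hfL (φ k)).toLp (f (φ k))) u) (hwν.toLp w u) ∂ν
        = ∫ u, inner ℝ (h (φ k) u) (w u) ∂μ := by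
      intro k
      have : ∫ u, inner ℝ (((hfL (φ k)).toLp (f (φ k))) u) (hwν.toLp w u) ∂ν
        = ∫ u, inner ℝ (f (φ k) u) (w u) ∂ν := by
        apply integral_congr_ae
        filter_upwards [(hfL (φ k)).coeFn_toLp, hwν.coeFn_toLp] with u h1 h2
        rw [h1, h2]
      rw [this, integral_withDensity_eq_integral_smul hG]
      congr 1; ext u
      simp only [f, NNReal.smul_def]
      rw [real_inner_smul_left, smul_eq_mul, ← mul_assoc, NNReal.coe_inv, mul_inv_cancel₀
        (by exact_mod_cast hG0 u), one_mul]
    have e2 : ∫ u, inner ℝ (F u) (hwν.toLp w u) ∂ν = ∫ u, inner ℝ (G u • F u) (w u) ∂μ := by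
      have : ∫ u, inner ℝ (F u) (hwν.toLp w u) ∂ν = ∫ u, inner ℝ (F u) (w u) ∂ν := by
        apply integral_congr_ae
        filter_upwards [hwν.coeFn_toLp] with u h2
        rw [h2]
      rw [this, integral_withDensity_eq_integral_smul hG]
      congr 1; ext u
      simp only [NNReal.smul_def]
      rw [real_inner_smul_left, smul_eq_mul]
    simp only [e1, e2] at this
    exact this

theorem ae_le_iSup_of_weak {m : ℕ} (μ : Measure ℝ) [IsFiniteMeasure μ] (g : ℝ → ℝ)
    (hg : Integrable g μ) (h : ℕ → ℝ → Euc m) (hint : ∀ n, Integrable (h n) μ)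
    (hb : ∀ᵐ u ∂μ, ∀ n, ‖h n u‖ ≤ g u) (F : ℝ → Euc m) (hF : Integrable F μ)
    (hw : ∀ w : ℝ → Euc m, MemLp w ⊤ μ →
        Tendsto (fun k => ∫ u, inner ℝ (h k u) (w u) ∂μ) atTop
          (𝓝 (∫ u, inner ℝ (F u) (w u) ∂μ))) (p : Euc m) (k : ℕ) :
    ∀ᵐ u ∂μ, inner ℝ p (F u) ≤ ⨆ n, inner ℝ p (h (n + k) u) := by
  have hbd : ∀ᵐ u ∂μ, ∀ n, |(inner ℝ p (h (n + k) u) : ℝ)| ≤ ‖p‖ * g u := by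
    filter_upwards [hb] with u hu n
    exact (abs_real_inner_le_norm _ _).trans (by gcongr; exact hu _)
  have hmeas : AEMeasurable (fun u => ⨆ n, (inner ℝ p (h (n + k) u) : ℝ)) μ :=
    AEMeasurable.iSup fun n => ((hint (n + k)).const_inner p).aemeasurable
  have hsup : Integrable (fun u => ⨆ n, (inner ℝ p (h (n + k) u) : ℝ)) μ := by
    refine (hg.const_mul ‖p‖).mono' hmeas.aestronglyMeasurable ?_
    filter_upwards [hbd] with u hu
    rw [Real.norm_eq_abs, abs_le]
    refine ⟨?_, ciSup_le fun n => (abs_le.1 (hu n)).2⟩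
    exact (abs_le.1 (hu 0)).1.trans
      (le_ciSup (f := fun n => (inner ℝ p (h (n + k) u) : ℝ)) ⟨_, by rintro _ ⟨n, rfl⟩; exact (abs_le.1 (hu n)).2⟩ 0)
  refine ae_le_of_forall_setIntegral_le (hF.const_inner p) hsup fun s hs _ => ?_
  have hwm : MemLp (s.indicator fun _ => p) ⊤ μ := (memLp_top_const p).indicator hs
  have heq : ∀ f : ℝ → Euc m, ∫ u, inner ℝ (f u) (s.indicator (fun _ => p) u) ∂μ
      = ∫ u in s, inner ℝ p (f u) ∂μ := by
    intro f
    rw [← integral_indicator hs]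
    congr 1; ext u
    by_cases hu : u ∈ s <;> simp [hu, real_inner_comm]
  have := hw _ hwm
  simp only [heq] at this
  refine le_of_tendsto this (eventually_atTop.2 ⟨k, fun n hn => ?_⟩)
  refine setIntegral_mono_ae ((hint n).const_inner p).integrableOn hsup.integrableOn ?_
  filter_upwards [hbd] with u hu
  obtain ⟨j, rfl⟩ := Nat.exists_eq_add_of_le' hn
  exact le_ciSup (f := fun n => (inner ℝ p (h (n + k) u) : ℝ)) ⟨_, by rintro _ ⟨n, rfl⟩; exact (abs_le.1 (hu n)).2⟩ j

open RealInnerProductSpace in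
/-- (Proposition `convsimple`, convex case.) Given uniformly
integrally bounded set-valued maps `H_n` on `[0,T]` with `limsup_n H_n(τ) ⊆ H(τ)`
pointwise, `H` having nonempty convex images, any sequence of integrable selections
`h_n` of `H_n` admits a subsequence converging weakly in `L¹` to an integrable
selection `h` of `H`; in particular the primitives converge pointwise. -/
theorem weak_limit_of_selections_convex
    {m : ℕ} (T : ℝ) (hT : 0 < T)
    (Hn : ℕ → ℝ → Set (Euc m)) (H : ℝ → Set (Euc m))
    (hbound : ∃ g : ℝ → ℝ, IntegrableOn g (Icc (0:ℝ) T) volume ∧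
      ∀ (n : ℕ), ∀ t ∈ Icc (0:ℝ) T, ∀ x ∈ Hn n t, ‖x‖ ≤ g t)
    (hHne : ∀ τ ∈ Icc (0:ℝ) T, (H τ).Nonempty)
    (hHconv : ∀ τ ∈ Icc (0:ℝ) T, Convex ℝ (H τ))
    (hlimsup : ∀ τ ∈ Icc (0:ℝ) T, setLimsup (fun n => Hn n τ) ⊆ H τ)
    (hn : ℕ → ℝ → Euc m)
    (hsel : ∀ n : ℕ, IntegrableOn (hn n) (Icc (0:ℝ) T) volume ∧
      ∀ u ∈ Icc (0:ℝ) T, hn n u ∈ Hn n u) :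
    ∃ φ : ℕ → ℕ, StrictMono φ ∧ ∃ h : ℝ → Euc m,
      IntegrableOn h (Icc (0:ℝ) T) volume ∧
      (∀ u ∈ Icc (0:ℝ) T, h u ∈ H u) ∧
      (∀ g : ℝ → Euc m, MemLp g ⊤ (volume.restrict (Icc (0:ℝ) T)) →
        Tendsto (fun k => ∫ u in Icc (0:ℝ) T, ⟪hn (φ k) u, g u⟫)
          atTop (𝓝 (∫ u in Icc (0:ℝ) T, ⟪h u, g u⟫))) ∧
      ∀ τ ∈ Icc (0:ℝ) T,
        Tendsto (fun k => ∫ u in (0:ℝ)..τ, hn (φ k) u) atTop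
          (𝓝 (∫ u in (0:ℝ)..τ, h u)) := by
  classical
  obtain ⟨g, hg, hgb⟩ := hbound
  set μ := volume.restrict (Icc (0:ℝ) T) with hμ
  have hint : ∀ n, Integrable (hn n) μ := fun n => (hsel n).1
  have hmem : ∀ᵐ u ∂μ, u ∈ Icc (0:ℝ) T := ae_restrict_mem measurableSet_Icc
  have hb : ∀ᵐ u ∂μ, ∀ n, ‖hn n u‖ ≤ g u := by
    filter_upwards [hmem] with u hu n
    exact hgb n u hu _ ((hsel n).2 u hu)
  obtain ⟨φ, hφ, F, hF, hw⟩ := weak_L1_compact μ g hg hn hint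
    (fun n => hb.mono fun u hu => hu n)
  obtain ⟨D, hDc, hDd⟩ := TopologicalSpace.exists_countable_dense (Euc m)
  have hall : ∀ᵐ u ∂μ, ∀ p ∈ D, ∀ k : ℕ,
      inner ℝ p (F u) ≤ ⨆ n, inner ℝ p (hn (φ (n + k)) u) := by
    rw [ae_ball_iff hDc]
    intro p _
    rw [ae_all_iff]
    intro k
    exact ae_le_iSup_of_weak μ g hg (fun n => hn (φ n)) (fun n => hint _)
      (hb.mono fun u hu n => hu _) F hF hw p k
  have hFH : ∀ᵐ u ∂μ, F u ∈ H u := by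
    filter_upwards [hall, hmem] with u hu huI
    refine convexHull_min (hlimsup u huI) (hHconv u huI) ?_
    exact mem_convexHull_limsup (fun n => Hn n u) (g u) (fun n x hx => hgb n u huI x hx) φ hφ
      (fun n => hn (φ n) u) (fun n => (hsel _).2 u huI) D hDd (F u) hu
  choose! s hs using hHne
  let h : ℝ → Euc m := fun u => if F u ∈ H u then F u else s u
  have hhF : F =ᵐ[μ] h := by
    filter_upwards [hFH] with u hu
    simp [h, hu]
  have hh : Integrable h μ := hF.congr hhF
  have hwh : ∀ w : ℝ → Euc m, MemLp w ⊤ μ →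
        Tendsto (fun k => ∫ u, inner ℝ (hn (φ k) u) (w u) ∂μ) atTop
          (𝓝 (∫ u, inner ℝ (h u) (w u) ∂μ)) := by
    intro w hwm
    have : ∫ u, inner ℝ (h u) (w u) ∂μ = ∫ u, inner ℝ (F u) (w u) ∂μ := by
      apply integral_congr_ae
      filter_upwards [hhF] with u hu
      rw [hu]
    rw [this]
    exact hw w hwm
  refine ⟨φ, hφ, h, hh, ?_, hwh, ?_⟩
  · intro u hu
    by_cases hc : F u ∈ H u
    · simpa [h, hc] using hc
    · simpa [h, hc] using hs u hu
  · intro τ hτ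
    have hsub : Ioc 0 τ ⊆ Icc (0:ℝ) T := fun u hu => ⟨hu.1.le, hu.2.trans hτ.2⟩
    have key : ∀ (f : ℝ → Euc m), Integrable f μ → ∀ p : Euc m,
        ∫ u, inner ℝ (f u) ((Ioc 0 τ).indicator (fun _ => p) u) ∂μ
          = inner ℝ p (∫ u in (0:ℝ)..τ, f u) := by
      intro f hf p
      have hfi : Integrable f (volume.restrict (Ioc 0 τ)) :=
        IntegrableOn.mono_set (t := Icc 0 T) hf hsub
      rw [intervalIntegral.integral_of_le hτ.1, ← integral_inner hfi]
      have : ∫ u, inner ℝ (f u) ((Ioc 0 τ).indicator (fun _ => p) u) ∂μ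
          = ∫ u in Ioc 0 τ, inner ℝ p (f u) ∂μ := by
        rw [← integral_indicator measurableSet_Ioc]
        congr 1; ext u
        by_cases hu : u ∈ Ioc 0 τ
        · simp only [indicator_of_mem hu]; exact real_inner_comm _ _
        · simp only [indicator_of_notMem hu]; simp
      rw [this, hμ, Measure.restrict_restrict measurableSet_Ioc, inter_eq_left.2 hsub]
    have hconv : ∀ p : Euc m, Tendsto (fun k => (inner ℝ p (∫ u in (0:ℝ)..τ, hn (φ k) u) : ℝ)) atTop
        (𝓝 (inner ℝ p (∫ u in (0:ℝ)..τ, h u))) := by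
      intro p
      have := hwh ((Ioc 0 τ).indicator fun _ => p) ((memLp_top_const p).indicator measurableSet_Ioc)
      simp only [key _ (hint _), key _ hh] at this
      exact this
    rw [(PiLp.homeomorph 2 (fun _ : Fin m => ℝ)).isInducing.tendsto_nhds_iff, tendsto_pi_nhds]
    intro i
    have := hconv (EuclideanSpace.single i 1)
    simp only [EuclideanSpace.inner_single_left, map_one, one_mul] at this
    exact this
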